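/- arXiv:1903.12353 — 2 statements merged into one kernel-verified Lean document; each statement's English description precedes it below -/
import Mathlib

section
/- Let b be a prime and let P be a digital net over F_b with generating matrices C_1,...,C_s in F_b^{n x m}, with dual net P^perp. Then for every z in N_0, the number of k in P^perp \ {0} with mu_1(k) = z equals 0 if z < mu_1(P^perp), and is at most b^{z - mu_1(P^perp) + 1} (z+1)^{s-1} if z >= mu_1(P^perp). -/
open MeasureTheory Finset Matrix

noncomputable section

/-- The `i`-th `b`-adic digit of a natural number `k`. -/
def ndigit (b k i : ℕ) : ℕ := k / b ^ i % b

/-- The truncated digit vector `ν_n(k) ∈ F_b^n`. -/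
def digitVec (b n : ℕ) (k : ℕ) : Fin n → ZMod b := fun i => (ndigit b k i.val : ZMod b)

/-- The dual net of the digital net with generating matrices `C_1,...,C_s ∈ F_b^{n×m}`. -/
def dualNet {s n m : ℕ} (b : ℕ) (C : Fin s → Matrix (Fin n) (Fin m) (ZMod b)) :
    Set (Fin s → ℕ) :=
  {k | ∑ j, (C j)ᵀ.mulVec (digitVec b n (k j)) = 0}

/-- The list of positions (in decreasing order) of the nonzero `b`-adic digits of `k`;
position `i` corresponds to the digit of `b^i`, i.e. to the exponent `c - 1` in the paper. -/
def nzPos (b k : ℕ) : List ℕ :=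
  (((Finset.range k).filter fun i => ndigit b k i ≠ 0).sort (· ≤ ·)).reverse

/-- The Dick weight function `μ_α` (for `α = 1` the NRT weight). -/
def dickWeight (b α k : ℕ) : ℕ := (((nzPos b k).take α).map (· + 1)).sum

/-- The Dick weight of a vector of nonnegative integers. -/
def dickWeightV (b α : ℕ) {s : ℕ} (k : Fin s → ℕ) : ℕ := ∑ j, dickWeight b α (k j)

/-- `μ_α(P^⊥)`, the minimal Dick weight over nonzero elements of the dual net. -/
def minWeight {s n m : ℕ} (b α : ℕ) (C : Fin s → Matrix (Fin n) (Fin m) (ZMod b)) : ℕ :=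
  sInf (dickWeightV b α '' {k | k ∈ dualNet b C ∧ k ≠ 0})

/-- The list `κ_1 b^{c_1-1}, κ_2 b^{c_2-1}, ...` of nonzero terms of the `b`-adic
expansion of `k`, in decreasing order of the exponents. -/
def nzTerms (b k : ℕ) : List ℕ := (nzPos b k).map fun i => ndigit b k i * b ^ i

/-- `k^{(p)}`: the number `k` with its `p` most significant nonzero digits removed. -/
def trunc (b p k : ℕ) : ℕ := ((nzTerms b k).drop p).sum

/-- The term `κ_p b^{c_p-1}` (with the convention `κ_0 b^{c_0-1} = 0`). -/
def topTerm (b p k : ℕ) : ℕ := if p = 0 then 0 else (nzTerms b k).getD (p - 1) 0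

/-- `(k,l)` is of type `(p,q)`. -/
def IsType (b p q k l : ℕ) : Prop :=
  if k = l then p = 0 ∧ q = 0
  else trunc b p k = trunc b q l ∧ topTerm b p k ≠ topTerm b q l

/-- `(k,l) ∈ T_{≥ α}`: `(k,l)` is of type `(p,q)` for some `p + q ≥ α`. -/
def TGe (b α k l : ℕ) : Prop := ∃ p q : ℕ, α ≤ p + q ∧ IsType b p q k l

/-- `(k,l) ∈ T_{≥ α}` for vectors: some coordinate pair lies in `T_{≥ α}`. -/
def TGeV (b α : ℕ) {s : ℕ} (k l : Fin s → ℕ) : Prop := ∃ j, TGe b α (k j) (l j)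

/-- The `(i+1)`-st `b`-adic digit `ξ_{i+1}` of `x ∈ [0,1]` (for `x ≠ 1` the unique expansion
with infinitely many digits different from `b-1`; for `x = 1` all digits equal `b-1`). -/
def rdigit (b : ℕ) (x : ℝ) (i : ℕ) : ℕ :=
  if x = 1 then b - 1 else (⌊x * (b : ℝ) ^ (i + 1)⌋).toNat % b

/-- The `k`-th `b`-adic Walsh function. -/
def walsh (b k : ℕ) (x : ℝ) : ℂ :=
  Complex.exp (2 * (Real.pi : ℂ) * Complex.I *
    ((∑ i ∈ Finset.range k, ndigit b k i * rdigit b x i : ℕ) : ℂ) / (b : ℂ))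

/-- The multivariate `b`-adic Walsh function. -/
def walshV (b : ℕ) {s : ℕ} (k : Fin s → ℕ) (x : Fin s → ℝ) : ℂ := ∏ j, walsh b (k j) (x j)

/-- The unit cube `[0,1]^s`. -/
def cube (s : ℕ) : Set (Fin s → ℝ) := Set.univ.pi fun _ => Set.Icc 0 1

/-- The `(k,l)`-th Walsh coefficient of a kernel `K : [0,1]^s × [0,1]^s → ℝ`. -/
def walshCoeff (b : ℕ) {s : ℕ} (K : (Fin s → ℝ) → (Fin s → ℝ) → ℝ) (k l : Fin s → ℕ) : ℂ :=
  ∫ x in cube s, ∫ y in cube s,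
    (K x y : ℂ) * (starRingEnd ℂ) (walshV b k x) * walshV b l y

/-- The `b`-adic digital shift `x ⊕ y` of reals `x, y ∈ [0,1]`. -/
def dshift (b : ℕ) (x y : ℝ) : ℝ :=
  ∑' i : ℕ, (((rdigit b x i + rdigit b y i) % b : ℕ) : ℝ) / (b : ℝ) ^ (i + 1)

/-- Componentwise digital shift of vectors in `[0,1]^s`. -/
def dshiftV (b : ℕ) {s : ℕ} (x y : Fin s → ℝ) : Fin s → ℝ := fun j => dshift b (x j) (y j)

/-- The `h`-th point of the digital net with generating matrices `C_1,...,C_s ∈ F_b^{n×m}`. -/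
def netPoint {s n m : ℕ} (b : ℕ) (C : Fin s → Matrix (Fin n) (Fin m) (ZMod b)) (h : ℕ) :
    Fin s → ℝ :=
  fun j => ∑ i : Fin n, (((C j).mulVec (digitVec b m h) i).val : ℝ) / (b : ℝ) ^ (i.val + 1)

open Classical in
/-- The squared `L_2`-discrepancy of the point multiset `pts 0, ..., pts (N-1)` in `[0,1]^s`. -/
def sqL2 {s : ℕ} (N : ℕ) (pts : ℕ → (Fin s → ℝ)) : ℝ :=
  ∫ y in cube s,
    ((∑ h ∈ Finset.range N, if ∀ j, 0 ≤ pts h j ∧ pts h j < y j then (1 : ℝ) else 0) / N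
      - ∏ j, y j) ^ 2

/-- The Bernoulli polynomial `B_r` evaluated at a real `x`. -/
def bpoly (r : ℕ) (x : ℝ) : ℝ := Polynomial.aeval x (Polynomial.bernoulli r)

/-- The one-dimensional reproducing kernel `K_α` of the Sobolev space of smoothness `α`. -/
def sobKer1 (α : ℕ) (x y : ℝ) : ℝ :=
  ∑ r ∈ Finset.range (α + 1), bpoly r x * bpoly r y / ((r.factorial : ℝ)) ^ 2
    + (-1 : ℝ) ^ (α + 1) * bpoly (2 * α) |x - y| / ((2 * α).factorial : ℝ)

/-- The `s`-fold product kernel `K_{α,s}`. -/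
def sobKer (α : ℕ) {s : ℕ} (x y : Fin s → ℝ) : ℝ := ∏ j, sobKer1 α (x j) (y j)

/-- The constant `C_{τ,b}`. -/
def Ctau (b τ : ℕ) : ℝ :=
  if τ ≤ 1 then 1 / (2 * Real.sin (Real.pi / b))
  else (1 + 1 / (b : ℝ) + 1 / ((b : ℝ) * ((b : ℝ) + 1))) ^ (τ - 2)
      / (2 * Real.sin (Real.pi / b)) ^ τ

end

/-!
For `b > 1` the NRT weight of `k` is the least `d` with `k < b ^ d`, so the vectors of weight `z`
lie in the boxes `∏ j, [0, b ^ c j)` with `∑ j, c j = z`, of which there are at most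
`(z + 1) ^ (s - 1)`. Write `w` for the minimal weight of the dual net and choose `d ≤ c` with
`∑ j, d j = w - 1`. Two elements of the dual net in the box of `c` that agree above the lowest
`d j` digits in every coordinate `j` have a digitwise difference of weight less than `w`, which is
again in the dual net, so it vanishes. Hence the box contains at most
`b ^ ∑ j, (c j - d j) = b ^ (z - w + 1)` elements of the dual net.
-/

section Compositions

variable {ι : Type*}

lemma card_piAntidiag_le_pow [DecidableEq ι] (t : Finset ι) (n : ℕ) :
    #(piAntidiag t n) ≤ (n + 1) ^ (#t - 1) := by
  have card_eq : #(piAntidiag t n) = (#t + n - 1).choose n := by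
    rw [← card_finsuppAntidiag_nat_eq_choose, finsuppAntidiag, card_map, card_attach]
  rw [card_eq]
  cases #t with
  | zero => cases n <;> simp
  | succ r =>
    rw [Nat.add_right_comm, Nat.add_sub_cancel, Nat.add_sub_cancel, add_comm r n,
      Nat.choose_symm_add]
    exact Nat.choose_add_le_add_one_pow n r

lemma exists_le_sum_eq [Fintype ι] {c : ι → ℕ} {N : ℕ} (hN : N ≤ ∑ i, c i) :
    ∃ d ≤ c, ∑ i, d i = N := by
  obtain ⟨d, hdc, hd⟩ := (Finsupp.equivFunOnFinite.symm c).exists_le_degree_eq N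
    (by simpa [Finsupp.degree_eq_sum] using hN)
  exact ⟨d, hdc, by rwa [Finsupp.degree_eq_sum] at hd⟩

end Compositions

section Digits

variable {b k l d : ℕ}

lemma ndigit_div_pow (b k d i : ℕ) : ndigit b (k / b ^ d) i = ndigit b k (d + i) := by
  rw [ndigit, ndigit, Nat.div_div_eq_div_mul, pow_add]

lemma ndigit_zero_right (b i : ℕ) : ndigit b 0 i = 0 := by
  simp [ndigit]

lemma ndigit_injective (hb : 1 < b) : Function.Injective (ndigit b) := by
  intro k l hkl
  have lt_pow {x : ℕ} (hx : x ≤ max k l) : x < b ^ max k l :=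
    (Nat.lt_pow_self hb).trans_le (Nat.pow_le_pow_right (Nat.zero_lt_of_lt hb) hx)
  have digits_eq : finFunctionFinEquiv.symm (⟨k, lt_pow (le_max_left k l)⟩ : Fin (b ^ max k l)) =
      finFunctionFinEquiv.symm ⟨l, lt_pow (le_max_right k l)⟩ :=
    funext fun i => Fin.ext (congrFun hkl i)
  exact congrArg Fin.val (finFunctionFinEquiv.symm.injective digits_eq)

lemma natCast_ndigit_inj {i : ℕ} :
    (ndigit b k i : ZMod b) = ndigit b l i ↔ ndigit b k i = ndigit b l i := by
  simp [ZMod.natCast_eq_natCast_iff', ndigit]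

lemma lt_pow_iff_forall_ndigit_eq_zero (hb : 1 < b) :
    k < b ^ d ↔ ∀ i, d ≤ i → ndigit b k i = 0 := by
  calc k < b ^ d ↔ k / b ^ d = 0 := by
        rw [Nat.div_eq_zero_iff_lt (Nat.pow_pos (Nat.zero_lt_of_lt hb))]
    _ ↔ ∀ i, ndigit b k (d + i) = 0 := by
        rw [← (ndigit_injective hb).eq_iff, funext_iff]
        simp only [ndigit_div_pow, ndigit_zero_right]
    _ ↔ ∀ i, d ≤ i → ndigit b k i = 0 := by
        simp only [le_iff_exists_add, forall_exists_index, forall_eq_apply_imp_iff]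

lemma exists_lt_pow_natCast_ndigit_eq [NeZero b] (d : ℕ) (f : ℕ → ZMod b) :
    ∃ r < b ^ d, ∀ i < d, (ndigit b r i : ZMod b) = f i := by
  let digits : Fin d → Fin b := fun i => ⟨(f i).val, ZMod.val_lt (f i)⟩
  refine ⟨finFunctionFinEquiv digits, Fin.is_lt _, fun i hi => ?_⟩
  have digit_eq : ndigit b (finFunctionFinEquiv digits) i = (f i).val :=
    congrArg Fin.val (congrFun (finFunctionFinEquiv.symm_apply_apply digits) ⟨i, hi⟩)
  rw [digit_eq, ZMod.natCast_zmod_val]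

lemma exists_lt_pow_natCast_ndigit_eq_sub (hb : 1 < b) (h : k / b ^ d = l / b ^ d) :
    ∃ r < b ^ d, ∀ i, (ndigit b r i : ZMod b) = ndigit b k i - ndigit b l i := by
  have : NeZero b := ⟨Nat.ne_zero_of_lt hb⟩
  obtain ⟨r, hr, digit_eq⟩ :=
    exists_lt_pow_natCast_ndigit_eq d fun i => (ndigit b k i - ndigit b l i : ZMod b)
  refine ⟨r, hr, fun i => ?_⟩
  obtain hi | hi := lt_or_ge i d
  · exact digit_eq i hi
  · obtain ⟨e, rfl⟩ := Nat.exists_eq_add_of_le hi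
    rw [(lt_pow_iff_forall_ndigit_eq_zero hb).1 hr _ hi, ← ndigit_div_pow b k, h, ndigit_div_pow,
      Nat.cast_zero, sub_self]

end Digits

section Weight

variable {b k d : ℕ}

lemma mem_nzPos (hb : 1 < b) {i : ℕ} : i ∈ nzPos b k ↔ ndigit b k i ≠ 0 := by
  simp only [nzPos, List.mem_reverse, mem_sort, mem_filter, mem_range, and_iff_right_iff_imp]
  contrapose!
  exact (lt_pow_iff_forall_ndigit_eq_zero hb).1 (Nat.lt_pow_self hb) i

lemma pairwise_nzPos (b k : ℕ) : (nzPos b k).Pairwise (· ≥ ·) :=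
  List.pairwise_reverse.2 (pairwise_sort _ _)

lemma sum_map_take_one_le_iff {L : List ℕ} (hL : L.Pairwise (· ≥ ·)) :
    ((L.take 1).map (· + 1)).sum ≤ d ↔ ∀ i ∈ L, i < d := by
  cases L with
  | nil => simp
  | cons a L =>
    have le_head : ∀ i ∈ L, i ≤ a := (List.pairwise_cons.1 hL).1
    simpa [Nat.succ_le_iff] using fun ha i hi => (le_head i hi).trans_lt ha

lemma dickWeight_one_le_iff (hb : 1 < b) : dickWeight b 1 k ≤ d ↔ k < b ^ d := by
  rw [dickWeight, sum_map_take_one_le_iff (pairwise_nzPos b k),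
    lt_pow_iff_forall_ndigit_eq_zero hb]
  simp only [mem_nzPos hb, ← not_le]
  exact forall_congr' fun i => not_imp_comm.trans (by rw [not_not])

end Weight

section DualNet

variable {b s n m : ℕ} {C : Fin s → Matrix (Fin n) (Fin m) (ZMod b)} {k l r c d : Fin s → ℕ}

lemma minWeight_le_dickWeightV {α : ℕ} (hk : k ∈ dualNet b C) (hk0 : k ≠ 0) :
    minWeight b α C ≤ dickWeightV b α k :=
  Nat.sInf_le ⟨k, ⟨hk, hk0⟩, rfl⟩

lemma mem_dualNet_of_digitVec_eq_sub (hk : k ∈ dualNet b C) (hl : l ∈ dualNet b C)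
    (hr : ∀ j, digitVec b n (r j) = digitVec b n (k j) - digitVec b n (l j)) :
    r ∈ dualNet b C := by
  simp only [dualNet, Set.mem_ofPred_eq] at hk hl ⊢
  simp only [hr, mulVec_sub, sum_sub_distrib, hk, hl, sub_self]

lemma eq_of_div_pow_eq_of_sum_lt_minWeight (hb : 1 < b) (hk : k ∈ dualNet b C)
    (hl : l ∈ dualNet b C) (hd : ∑ j, d j < minWeight b 1 C)
    (hkl : ∀ j, k j / b ^ d j = l j / b ^ d j) : k = l := by
  choose r hr digit_eq using fun j => exists_lt_pow_natCast_ndigit_eq_sub hb (hkl j)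
  have r_mem : r ∈ dualNet b C :=
    mem_dualNet_of_digitVec_eq_sub hk hl fun j => funext fun i => digit_eq j i
  have weight_lt : dickWeightV b 1 r < minWeight b 1 C :=
    (sum_le_sum fun j _ => (dickWeight_one_le_iff hb).2 (hr j)).trans_lt hd
  have r_eq_zero : r = 0 := by
    by_contra r_ne_zero
    exact weight_lt.not_ge (minWeight_le_dickWeightV r_mem r_ne_zero)
  refine funext fun j => ndigit_injective hb (funext fun i => natCast_ndigit_inj.1 ?_)
  simpa [r_eq_zero, ndigit_zero_right, eq_comm, sub_eq_zero] using digit_eq j i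

open Classical in
/-- The elements of the dual net in the box `∏ j, [0, b ^ c j)`; for `b > 1` these are the ones
whose `j`-th coordinate has NRT weight at most `c j`. -/
noncomputable def dualNetBox (b : ℕ) {s n m : ℕ} (C : Fin s → Matrix (Fin n) (Fin m) (ZMod b))
    (c : Fin s → ℕ) : Finset (Fin s → ℕ) :=
  {k ∈ Fintype.piFinset fun j => range (b ^ c j) | k ∈ dualNet b C}

lemma mem_dualNetBox : k ∈ dualNetBox b C c ↔ (∀ j, k j < b ^ c j) ∧ k ∈ dualNet b C := by
  simp [dualNetBox]

lemma card_piFinset_range_pow {ι : Type*} [Fintype ι] [DecidableEq ι] (b : ℕ) (c : ι → ℕ) :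
    #(Fintype.piFinset fun i => range (b ^ c i)) = b ^ ∑ i, c i := by
  simp [prod_pow_eq_pow_sum]

lemma card_dualNetBox_le_of_sum_lt_minWeight (hb : 1 < b) (hdc : d ≤ c)
    (hd : ∑ j, d j < minWeight b 1 C) : #(dualNetBox b C c) ≤ b ^ ∑ j, (c j - d j) := by
  rw [← card_piFinset_range_pow]
  refine card_le_card_of_injOn (fun k j => k j / b ^ d j) (fun k hk => ?_) fun k hk l hl hkl => ?_
  · simp only [mem_coe, Fintype.mem_piFinset, mem_range]
    intro j
    apply Nat.div_lt_of_lt_mul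
    rw [← pow_add, Nat.add_sub_cancel' (hdc j)]
    exact (mem_dualNetBox.1 hk).1 j
  · exact eq_of_div_pow_eq_of_sum_lt_minWeight hb (mem_dualNetBox.1 hk).2 (mem_dualNetBox.1 hl).2
      hd (congrFun hkl)

/-- If `∑ j, c j + 1 < minWeight b 1 C`, the subtraction truncates and the bound is `1`. -/
lemma card_dualNetBox_le (hb : 1 < b) (C : Fin s → Matrix (Fin n) (Fin m) (ZMod b))
    (c : Fin s → ℕ) : #(dualNetBox b C c) ≤ b ^ (∑ j, c j + 1 - minWeight b 1 C) := by
  obtain hw | hw := (minWeight b 1 C).eq_zero_or_pos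
  · -- `minWeight b 1 C = 0` is the junk value `sInf ∅`; the size of the box is bound enough.
    calc #(dualNetBox b C c)
        ≤ #(Fintype.piFinset fun j => range (b ^ c j)) :=
          card_le_card fun k hk => by simpa using (mem_dualNetBox.1 hk).1
      _ = b ^ ∑ j, c j := card_piFinset_range_pow b c
      _ ≤ b ^ (∑ j, c j + 1 - minWeight b 1 C) :=
          Nat.pow_le_pow_right (Nat.zero_lt_of_lt hb) (by omega)
  · obtain ⟨d, hdc, hd⟩ :=
      exists_le_sum_eq (min_le_right (minWeight b 1 C - 1) (∑ j, c j))
    have exponent_eq : ∑ j, (c j - d j) = ∑ j, c j + 1 - minWeight b 1 C := by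
      rw [sum_tsub_distrib _ fun j _ => hdc j]
      omega
    rw [← exponent_eq]
    exact card_dualNetBox_le_of_sum_lt_minWeight hb hdc (by omega)

lemma setOf_dickWeightV_eq_subset (hb : 1 < b) (C : Fin s → Matrix (Fin n) (Fin m) (ZMod b))
    (z : ℕ) : {k | k ∈ dualNet b C ∧ k ≠ 0 ∧ dickWeightV b 1 k = z} ⊆
      ((piAntidiag univ z).biUnion (dualNetBox b C) : Finset (Fin s → ℕ)) := by
  rintro k ⟨hk, -, hz⟩
  refine mem_biUnion.2 ⟨fun j => dickWeight b 1 (k j),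
    mem_piAntidiag.2 ⟨hz, fun _ _ => mem_univ _⟩, ?_⟩
  exact mem_dualNetBox.2 ⟨fun j => (dickWeight_one_le_iff hb).1 le_rfl, hk⟩

lemma card_biUnion_dualNetBox_le (hb : 1 < b) (C : Fin s → Matrix (Fin n) (Fin m) (ZMod b))
    (z : ℕ) : #((piAntidiag univ z).biUnion (dualNetBox b C)) ≤
      b ^ (z + 1 - minWeight b 1 C) * (z + 1) ^ (s - 1) := by
  have box_le : ∀ c ∈ piAntidiag univ z, #(dualNetBox b C c) ≤ b ^ (z + 1 - minWeight b 1 C) := by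
    intro c hc
    rw [← (mem_piAntidiag.1 hc).1]
    exact card_dualNetBox_le hb C c
  calc #((piAntidiag univ z).biUnion (dualNetBox b C))
      ≤ #(piAntidiag (univ : Finset (Fin s)) z) * b ^ (z + 1 - minWeight b 1 C) :=
        card_biUnion_le_card_mul _ _ _ box_le
    _ ≤ b ^ (z + 1 - minWeight b 1 C) * (z + 1) ^ (s - 1) := by
        rw [mul_comm]
        gcongr
        simpa using card_piAntidiag_le_pow (univ : Finset (Fin s)) z

end DualNet

theorem stmt_0_general (b : ℕ) (hb : 1 < b) (s n m : ℕ)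
    (C : Fin s → Matrix (Fin n) (Fin m) (ZMod b)) (z : ℕ) :
    (z < minWeight b 1 C →
      {k : Fin s → ℕ | k ∈ dualNet b C ∧ k ≠ 0 ∧ dickWeightV b 1 k = z}.ncard = 0) ∧
    (minWeight b 1 C ≤ z →
      {k : Fin s → ℕ | k ∈ dualNet b C ∧ k ≠ 0 ∧ dickWeightV b 1 k = z}.Finite ∧
      ({k : Fin s → ℕ | k ∈ dualNet b C ∧ k ≠ 0 ∧ dickWeightV b 1 k = z}.ncard : ℝ)
        ≤ (b : ℝ) ^ (z - minWeight b 1 C + 1) * ((z : ℝ) + 1) ^ (s - 1)) := by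
  refine ⟨fun hz => ?_, fun hz => ?_⟩
  · convert Set.ncard_empty (Fin s → ℕ)
    refine Set.eq_empty_of_forall_notMem fun k ⟨hk, hk0, hkz⟩ => ?_
    exact (hkz.trans_lt hz).not_ge (minWeight_le_dickWeightV hk hk0)
  · have cover := setOf_dickWeightV_eq_subset hb C z
    refine ⟨(finite_toSet _).subset cover, ?_⟩
    have card_le := (Set.ncard_le_ncard cover).trans_eq (Set.ncard_coe_finset _)
    rw [← Nat.sub_add_comm hz]
    exact_mod_cast card_le.trans (card_biUnion_dualNetBox_le hb C z)

/-- Lemma 2.1(1): counting dual-net elements of given NRT weight. -/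
theorem stmt_0 (b : ℕ) (hb : b.Prime) (s n m : ℕ)
    (C : Fin s → Matrix (Fin n) (Fin m) (ZMod b)) (z : ℕ) :
    (z < minWeight b 1 C →
      {k : Fin s → ℕ | k ∈ dualNet b C ∧ k ≠ 0 ∧ dickWeightV b 1 k = z}.ncard = 0) ∧
    (minWeight b 1 C ≤ z →
      {k : Fin s → ℕ | k ∈ dualNet b C ∧ k ≠ 0 ∧ dickWeightV b 1 k = z}.Finite ∧
      ({k : Fin s → ℕ | k ∈ dualNet b C ∧ k ≠ 0 ∧ dickWeightV b 1 k = z}.ncard : ℝ)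
        ≤ (b : ℝ) ^ (z - minWeight b 1 C + 1) * ((z : ℝ) + 1) ^ (s - 1)) :=
  stmt_0_general b hb.one_lt s n m C z
end

section
/- Let b be a prime and let alpha, beta be positive integers with alpha <= beta. Then for every s in N and every k in N_0^s, mu_alpha(k)/alpha >= mu_beta(k)/beta. -/
open MeasureTheory Finset Matrix

/-!
Among the nonzero digit positions of `k`, listed in decreasing order, every position after the
first `α` is at most every one of the first `α`. Hence prolonging the list from `α` to `β` entries
cannot raise its average; the missing entries of a short list count as `0`, which only lowers it.
Multiplied out, the inequality is additive and so passes from the coordinates to vectors.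
-/

section SortedList

variable {M : Type*} [AddCommMonoid M] [Preorder M] [AddLeftMono M] {l : List M}

lemma nsmul_sum_take_drop_le_nsmul_sum_take (hl : l.SortedGE) (hnonneg : ∀ x ∈ l, 0 ≤ x)
    (m d : ℕ) : m • ((l.drop m).take d).sum ≤ d • (l.take m).sum := by
  rcases le_or_gt l.length m with hm | hm
  · simpa [List.drop_eq_nil_of_le hm, List.take_of_length_le hm] using
      nsmul_nonneg (List.sum_nonneg hnonneg) d
  have block_sum_le : ((l.drop m).take d).sum ≤ d • l[m] := by
    have entry_le : ∀ x ∈ (l.drop m).take d, x ≤ l[m] := by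
      intro x hx
      obtain ⟨i, hi, rfl⟩ := List.mem_drop_iff_getElem.mp (List.mem_of_mem_take hx)
      exact hl.getElem_ge_getElem_of_le (Nat.le_add_right m i)
    exact (List.sum_le_card_nsmul _ _ entry_le).trans <|
      nsmul_le_nsmul_left (hnonneg _ (List.getElem_mem hm)) (List.length_take_le d _)
  have le_initial_sum : m • l[m] ≤ (l.take m).sum := by
    have le_entry : ∀ x ∈ l.take m, l[m] ≤ x := by
      intro x hx
      obtain ⟨i, hi, rfl⟩ := List.mem_take_iff_getElem.mp hx
      exact hl.getElem_ge_getElem_of_le (by omega)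
    simpa [hm.le] using List.card_nsmul_le_sum _ _ le_entry
  calc m • ((l.drop m).take d).sum
      ≤ m • d • l[m] := nsmul_le_nsmul_right block_sum_le m
    _ = d • m • l[m] := smul_comm m d _
    _ ≤ d • (l.take m).sum := nsmul_le_nsmul_right le_initial_sum d

lemma nsmul_sum_take_le_nsmul_sum_take (hl : l.SortedGE) (hnonneg : ∀ x ∈ l, 0 ≤ x)
    {m n : ℕ} (hmn : m ≤ n) : m • (l.take n).sum ≤ n • (l.take m).sum := by
  obtain ⟨d, rfl⟩ := Nat.exists_eq_add_of_le hmn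
  calc m • (l.take (m + d)).sum
      = m • (l.take m).sum + m • ((l.drop m).take d).sum := by
        rw [List.take_add, List.sum_append, nsmul_add]
    _ ≤ m • (l.take m).sum + d • (l.take m).sum :=
        add_le_add_right (nsmul_sum_take_drop_le_nsmul_sum_take hl hnonneg m d) _
    _ = (m + d) • (l.take m).sum := (add_nsmul _ m d).symm

end SortedList

lemma sortedGE_nzPos (b k : ℕ) : (nzPos b k).SortedGE :=
  (Finset.pairwise_sort _ _).sortedLE.reverse

lemma mul_dickWeight_le_mul_dickWeight (b k : ℕ) {α β : ℕ} (hαβ : α ≤ β) :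
    α * dickWeight b β k ≤ β * dickWeight b α k := by
  have sorted : ((nzPos b k).map (· + 1)).SortedGE :=
    (strictMono_id.add_const 1).sortedGE_listMap.mpr (sortedGE_nzPos b k)
  simpa only [dickWeight, List.map_take, smul_eq_mul] using
    nsmul_sum_take_le_nsmul_sum_take sorted (fun _ _ => Nat.zero_le _) hαβ

lemma mul_dickWeightV_le_mul_dickWeightV (b : ℕ) {s : ℕ} (k : Fin s → ℕ) {α β : ℕ}
    (hαβ : α ≤ β) : α * dickWeightV b β k ≤ β * dickWeightV b α k := by
  simp only [dickWeightV, Finset.mul_sum]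
  exact Finset.sum_le_sum fun j _ => mul_dickWeight_le_mul_dickWeight b (k j) hαβ

theorem stmt_2_general (b : ℕ) (α β : ℕ) (hα : 0 < α) (hβ : α ≤ β) (s : ℕ) (k : Fin s → ℕ) :
    (dickWeightV b β k : ℝ) / (β : ℝ) ≤ (dickWeightV b α k : ℝ) / (α : ℝ) := by
  have hβ_pos : 0 < β := hα.trans_le hβ
  rw [div_le_div_iff₀ (Nat.cast_pos.mpr hβ_pos) (Nat.cast_pos.mpr hα), mul_comm, mul_comm _ (β : ℝ)]
  exact_mod_cast mul_dickWeightV_le_mul_dickWeightV b k hβ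

/-- `μ_α(k)/α ≥ μ_β(k)/β` for `α ≤ β`. -/
theorem stmt_2 (b : ℕ) (hb : b.Prime) (α β : ℕ) (hα : 0 < α) (hβ : α ≤ β)
    (s : ℕ) (k : Fin s → ℕ) :
    (dickWeightV b β k : ℝ) / (β : ℝ) ≤ (dickWeightV b α k : ℝ) / (α : ℝ) :=
  stmt_2_general b α β hα hβ s k
end
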